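/- There exists a constant C > 0 such that for every κ ≥ 1, every C² function f : ℝ → ℝ with f, f′, f″ bounded, and every Schwartz function h : ℝ → ℂ, the function x ↦ 16κ⁵ ∬_{ℝ×ℝ} (2κ)^{-1}e^{-κ|x−y|} f(y) (2κ)^{-1}e^{-κ|y−z|} h(z) (2κ)^{-1}e^{-κ|z−x|} dy dz − 3 f(x)h(x) has L²(ℝ) norm at most C κ^{-2} (sup|f| + sup|f′| + sup|f″|) (‖h‖_{L²} + ‖h″‖_{L²}); that is, ‖16κ⁵⟨δₓ, R₀ f R₀ h R₀ δₓ⟩ − 3fh‖_{L²} ≲ κ^{-2} ‖f‖_{W^{2,∞}} ‖h‖_{H²} uniformly for κ ≥ 1. -/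

import Mathlib

open MeasureTheory

/-!
Translating by `x`, the diagonal element `⟨δₓ, R₀ f R₀ h R₀ δₓ⟩` is the integral of
`f(x + u) h(x + v)` against the weight `K(u, v) = R₀(0, u) R₀(u, v) R₀(v, 0)`. Expand
`f(x + u) h(x + v)` to first order at `x`. The total mass of `K` is `3 / (16κ⁵)`, which accounts for
the term `3fh`; the linear terms integrate to zero because `K` is even. In `L²(dx)` the remainder is
at most `(u² + v²) ‖f‖_{W^{2,∞}} ‖h‖_{H²}` up to a constant, and the second moment of `K` is
`O(κ⁻⁷)`, so Minkowski's integral inequality gives the bound `16κ⁵ · O(κ⁻⁷) = O(κ⁻²)`.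
-/

open Function (uncurry)
open scoped ENNReal NNReal

section Minkowski

variable {α β : Type*} [MeasurableSpace α] [MeasurableSpace β] {μ : Measure α} {ν : Measure β}

lemma lintegral_lintegral_sq_le [SFinite μ] [SFinite ν] {G : α → β → ℝ≥0∞}
    (hG : Measurable (uncurry G)) :
    ∫⁻ x, (∫⁻ a, G x a ∂ν) ^ 2 ∂μ ≤
      (∫⁻ a, (∫⁻ x, G x a ^ (2 : ℝ) ∂μ) ^ (1 / 2 : ℝ) ∂ν) ^ 2 := by
  have hGa : ∀ a, Measurable fun x => G x a := fun a => hG.comp measurable_prodMk_right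
  have hGx : ∀ x, Measurable (G x) := fun x => hG.comp measurable_prodMk_left
  set N : β → ℝ≥0∞ := fun a => (∫⁻ x, G x a ^ (2 : ℝ) ∂μ) ^ (1 / 2 : ℝ)
  have hN : Measurable N := (hG.pow_const (2 : ℝ)).lintegral_prod_left'.pow_const _
  have cauchy_schwarz (a b : β) : ∫⁻ x, G x a * G x b ∂μ ≤ N a * N b :=
    ENNReal.lintegral_mul_le_Lp_mul_Lq μ Real.HolderConjugate.two_two
      (hGa a).aemeasurable (hGa b).aemeasurable
  calc ∫⁻ x, (∫⁻ a, G x a ∂ν) ^ 2 ∂μ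
      = ∫⁻ x, ∫⁻ a, ∫⁻ b, G x a * G x b ∂ν ∂ν ∂μ := by
        refine lintegral_congr fun x => ?_
        simp only [lintegral_const_mul _ (hGx x), lintegral_mul_const _ (hGx x), sq]
    _ = ∫⁻ a, ∫⁻ x, ∫⁻ b, G x a * G x b ∂ν ∂μ ∂ν := by
        refine lintegral_lintegral_swap (Measurable.aemeasurable ?_)
        simp only [lintegral_const_mul _ (hGx _)]
        exact hG.mul (hG.lintegral_prod_right'.comp measurable_fst)
    _ = ∫⁻ a, ∫⁻ b, ∫⁻ x, G x a * G x b ∂μ ∂ν ∂ν :=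
        lintegral_congr fun a => lintegral_lintegral_swap
          (((hGa a).comp measurable_fst).mul hG).aemeasurable
    _ ≤ ∫⁻ a, ∫⁻ b, N a * N b ∂ν ∂ν :=
        lintegral_mono fun a => lintegral_mono fun b => cauchy_schwarz a b
    _ = (∫⁻ a, N a ∂ν) ^ 2 := by
        simp only [lintegral_const_mul _ hN, lintegral_mul_const _ hN, sq]

variable {E : Type*} [NormedAddCommGroup E]

lemma eLpNorm_two_eq_lintegral (f : α → E) :
    eLpNorm f 2 μ = (∫⁻ x, ‖f x‖ₑ ^ (2 : ℝ) ∂μ) ^ (1 / 2 : ℝ) := by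
  simpa using eLpNorm_eq_lintegral_rpow_enorm_toReal (f := f) (μ := μ) two_ne_zero
    ENNReal.ofNat_ne_top

lemma eLpNorm_add_add_le {f g k : α → E} (hf : AEStronglyMeasurable f μ)
    (hg : AEStronglyMeasurable g μ) (hk : AEStronglyMeasurable k μ) {q : ℝ≥0∞} (hq : 1 ≤ q) :
    eLpNorm (f + g + k) q μ ≤ eLpNorm f q μ + eLpNorm g q μ + eLpNorm k q μ :=
  (eLpNorm_add_le (hf.add hg) hk hq).trans (add_le_add_left (eLpNorm_add_le hf hg hq) _)

lemma eLpNorm_two_integral_le [NormedSpace ℝ E] [SFinite μ] [SFinite ν] {g : α → β → E}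
    (hg : StronglyMeasurable (uncurry g)) :
    eLpNorm (fun x => ∫ a, g x a ∂ν) 2 μ ≤ ∫⁻ a, eLpNorm (fun x => g x a) 2 μ ∂ν := by
  simp only [eLpNorm_two_eq_lintegral]
  rw [one_div, ENNReal.rpow_inv_le_iff two_pos]
  calc ∫⁻ x, ‖∫ a, g x a ∂ν‖ₑ ^ (2 : ℝ) ∂μ
      ≤ ∫⁻ x, (∫⁻ a, ‖g x a‖ₑ ∂ν) ^ 2 ∂μ := by
        refine lintegral_mono fun x => ?_
        rw [← ENNReal.rpow_two]
        gcongr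
        exact enorm_integral_le_lintegral_enorm _
    _ ≤ _ := by
        rw [ENNReal.rpow_two, ← one_div]
        exact lintegral_lintegral_sq_le hg.enorm

lemma sqrt_integral_norm_sq_eq_toReal_eLpNorm {f : α → E} (hf : MemLp f 2 μ) :
    √(∫ x, ‖f x‖ ^ 2 ∂μ) = (eLpNorm f 2 μ).toReal := by
  rw [hf.eLpNorm_eq_integral_rpow_norm two_ne_zero ENNReal.ofNat_ne_top,
    ENNReal.toReal_ofReal (by positivity), Real.sqrt_eq_rpow]
  simp

lemma sqrt_integral_norm_sq_le_of_eLpNorm_two_le {F f g : α → E} (hF : MemLp F 2 μ)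
    (hf : MemLp f 2 μ) (hg : MemLp g 2 μ) {c : ℝ} (hc : 0 ≤ c)
    (hle : eLpNorm F 2 μ ≤ ENNReal.ofReal c * (eLpNorm f 2 μ + eLpNorm g 2 μ)) :
    √(∫ x, ‖F x‖ ^ 2 ∂μ) ≤ c * (√(∫ x, ‖f x‖ ^ 2 ∂μ) + √(∫ x, ‖g x‖ ^ 2 ∂μ)) := by
  rw [sqrt_integral_norm_sq_eq_toReal_eLpNorm hF, sqrt_integral_norm_sq_eq_toReal_eLpNorm hf,
    sqrt_integral_norm_sq_eq_toReal_eLpNorm hg, ← ENNReal.toReal_add hf.eLpNorm_ne_top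
    hg.eLpNorm_ne_top, ← ENNReal.toReal_ofReal hc, ← ENNReal.toReal_mul]
  exact ENNReal.toReal_mono (ENNReal.mul_ne_top ENNReal.ofReal_ne_top
    (ENNReal.add_ne_top.2 ⟨hf.eLpNorm_ne_top, hg.eLpNorm_ne_top⟩)) hle

end Minkowski

section Increments

variable {E : Type*} [NormedAddCommGroup E]

lemma eLpNorm_comp_add_right {h : ℝ → E} (hh : Continuous h) (v : ℝ) (q : ℝ≥0∞) :
    eLpNorm (fun x => h (x + v)) q = eLpNorm h q :=
  eLpNorm_comp_measurePreserving hh.aestronglyMeasurable (measurePreserving_add_right volume v)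

variable [NormedSpace ℝ E]

lemma eLpNorm_smul_le_of_abs_le {α : Type*} [MeasurableSpace α] {μ : Measure α} {φ : α → ℝ} {c : ℝ}
    (hφ : ∀ x, |φ x| ≤ c) (h : α → E) (q : ℝ≥0∞) :
    eLpNorm (fun x => φ x • h x) q μ ≤ ENNReal.ofReal c * eLpNorm h q μ :=
  eLpNorm_le_mul_eLpNorm_of_ae_le_mul (.of_forall fun x => by
    rw [norm_smul]
    exact mul_le_mul_of_nonneg_right (hφ x) (norm_nonneg _)) q

lemma eLpNorm_two_smul_unitInterval_integral_le {G : ℝ → ℝ → E} (hG : Continuous (uncurry G))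
    (v : ℝ) {B : ℝ≥0∞} (hB : ∀ t ∈ Set.Ioc (0 : ℝ) 1, eLpNorm (fun x => G x t) 2 ≤ B) :
    eLpNorm (fun x => v • ∫ t in (0 : ℝ)..1, G x t) 2 ≤ ‖v‖ₑ * B := by
  simp only [intervalIntegral.integral_of_le zero_le_one]
  have hGm : StronglyMeasurable (uncurry G) := hG.stronglyMeasurable
  refine (eLpNorm_const_smul v (fun x => ∫ t in Set.Ioc (0 : ℝ) 1, G x t) 2 volume).trans_le ?_
  gcongr
  calc eLpNorm (fun x => ∫ t in Set.Ioc (0 : ℝ) 1, G x t) 2 volume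
      ≤ ∫⁻ t in Set.Ioc (0 : ℝ) 1, eLpNorm (fun x => G x t) 2 volume :=
        eLpNorm_two_integral_le hGm
    _ ≤ ∫⁻ _ in Set.Ioc (0 : ℝ) 1, B := setLIntegral_mono measurable_const hB
    _ = B := by simp

variable [CompleteSpace E]

lemma sub_eq_smul_integral_deriv {h : ℝ → E} (hd : Differentiable ℝ h)
    (hc : Continuous (deriv h)) (x v : ℝ) :
    h (x + v) - h x = v • ∫ t in (0 : ℝ)..1, deriv h (x + t * v) :=
  (intervalIntegral.integral_unitInterval_deriv_eq_sub (Continuous.continuousOn (by fun_prop))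
    fun _ _ => (hd _).hasDerivAt).symm

lemma sub_sub_smul_deriv_eq_smul_integral {h : ℝ → E} (hd : Differentiable ℝ h)
    (hc : Continuous (deriv h)) (x v : ℝ) :
    h (x + v) - h x - v • deriv h x =
      v • ∫ t in (0 : ℝ)..1, (deriv h (x + t * v) - deriv h x) := by
  rw [intervalIntegral.integral_sub (Continuous.intervalIntegrable (by fun_prop) _ _)
    intervalIntegrable_const, smul_sub, ← sub_eq_smul_integral_deriv hd hc]
  simp

lemma abs_sub_sub_mul_deriv_le {f : ℝ → ℝ} {K : ℝ≥0} (hd : Differentiable ℝ f)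
    (hf' : LipschitzWith K (deriv f)) (x u : ℝ) :
    |f (x + u) - f x - u * deriv f x| ≤ K * u ^ 2 := by
  have hint : |∫ t in (0 : ℝ)..1, (deriv f (x + t * u) - deriv f x)| ≤ K * |u| := by
    rw [← Real.norm_eq_abs, ← mul_one (K * |u|)]
    convert intervalIntegral.norm_integral_le_of_norm_le_const (a := (0 : ℝ)) (b := 1)
      (C := K * |u|) fun t ht => ?_
    · simp
    rw [Set.uIoc_of_le zero_le_one] at ht
    calc ‖deriv f (x + t * u) - deriv f x‖ ≤ K * ‖x + t * u - x‖ := hf'.norm_sub_le _ _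
      _ = K * (t * |u|) := by rw [add_sub_cancel_left, norm_mul, Real.norm_of_nonneg ht.1.le,
        Real.norm_eq_abs]
      _ ≤ K * |u| := by
        gcongr
        exact mul_le_of_le_one_left (abs_nonneg u) ht.2
  calc |f (x + u) - f x - u * deriv f x|
      = |u| * |∫ t in (0 : ℝ)..1, (deriv f (x + t * u) - deriv f x)| := by
        rw [← abs_mul, ← smul_eq_mul u (deriv f x),
          sub_sub_smul_deriv_eq_smul_integral hd hf'.continuous, smul_eq_mul]
    _ ≤ |u| * (K * |u|) := by gcongr
    _ = K * u ^ 2 := by rw [← sq_abs u]; ring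

variable {h : ℝ → E}

lemma eLpNorm_two_sub_le (hh : ContDiff ℝ 1 h) (v : ℝ) :
    eLpNorm (fun x => h (x + v) - h x) 2 ≤ ‖v‖ₑ * eLpNorm (deriv h) 2 := by
  have hc : Continuous (deriv h) := hh.continuous_deriv le_rfl
  simp only [sub_eq_smul_integral_deriv (hh.differentiable one_ne_zero) hc]
  have hG : Continuous (uncurry fun x t : ℝ => deriv h (x + t * v)) := by
    unfold uncurry
    fun_prop
  exact eLpNorm_two_smul_unitInterval_integral_le hG v fun t _ =>
    (eLpNorm_comp_add_right hc (t * v) 2).le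

lemma eLpNorm_two_sub_sub_smul_deriv_le (hh : ContDiff ℝ 2 h) (v : ℝ) :
    eLpNorm (fun x => h (x + v) - h x - v • deriv h x) 2 ≤
      ‖v‖ₑ ^ 2 * eLpNorm (iteratedDeriv 2 h) 2 := by
  have hc : Continuous (deriv h) := hh.continuous_deriv one_le_two
  simp only [sub_sub_smul_deriv_eq_smul_integral (hh.differentiable two_ne_zero) hc]
  have hh' : ContDiff ℝ 1 (deriv h) := hh.iterate_deriv' 1 1
  have hG : Continuous (uncurry fun x t : ℝ => deriv h (x + t * v) - deriv h x) := by
    unfold uncurry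
    fun_prop
  rw [sq, mul_assoc]
  refine eLpNorm_two_smul_unitInterval_integral_le hG v fun t ht => ?_
  calc eLpNorm (fun x => deriv h (x + t * v) - deriv h x) 2 volume
      ≤ ‖t * v‖ₑ * eLpNorm (deriv (deriv h)) 2 volume := eLpNorm_two_sub_le hh' _
    _ ≤ ‖v‖ₑ * eLpNorm (iteratedDeriv 2 h) 2 volume := by
        rw [iteratedDeriv_succ, iteratedDeriv_one]
        gcongr
        rw [enorm_le_iff_norm_le, norm_mul, Real.norm_of_nonneg ht.1.le]
        exact mul_le_of_le_one_left (norm_nonneg v) ht.2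

lemma eLpNorm_two_deriv_le (hh : ContDiff ℝ 2 h) :
    eLpNorm (deriv h) 2 ≤ 2 * (eLpNorm h 2 + eLpNorm (iteratedDeriv 2 h) 2) := by
  have hc : Continuous h := hh.continuous
  have hc' : Continuous (deriv h) := hh.continuous_deriv one_le_two
  let T : ℝ → E := fun x => h (x + 1)
  have hT : Continuous T := by fun_prop
  have hR_le : eLpNorm (T - h - deriv h) 2 ≤ eLpNorm (iteratedDeriv 2 h) 2 := by
    have hR := eLpNorm_two_sub_sub_smul_deriv_le hh 1
    simp only [one_smul, enorm_one, one_pow, one_mul] at hR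
    exact hR
  calc eLpNorm (deriv h) 2 volume
      = eLpNorm (T - h - (T - h - deriv h)) 2 volume := by rw [sub_sub_cancel]
    _ ≤ eLpNorm T 2 volume + eLpNorm h 2 volume + eLpNorm (T - h - deriv h) 2 volume :=
        (eLpNorm_sub_le (hT.sub hc).aestronglyMeasurable
          ((hT.sub hc).sub hc').aestronglyMeasurable one_le_two).trans
          (add_le_add_left (eLpNorm_sub_le hT.aestronglyMeasurable hc.aestronglyMeasurable
            one_le_two) _)
    _ ≤ eLpNorm h 2 volume + eLpNorm h 2 volume +
          (eLpNorm (iteratedDeriv 2 h) 2 volume + eLpNorm (iteratedDeriv 2 h) 2 volume) :=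
        add_le_add (add_le_add_left (eLpNorm_comp_add_right hc 1 2).le _)
          (hR_le.trans le_self_add)
    _ = 2 * (eLpNorm h 2 volume + eLpNorm (iteratedDeriv 2 h) 2 volume) := by ring

end Increments

section Exponential

lemma integral_abs_pow_mul_exp_neg_mul_abs {a : ℝ} (ha : 0 < a) (n : ℕ) :
    ∫ x : ℝ, |x| ^ n * Real.exp (-a * |x|) = 2 * (n.factorial / a ^ (n + 1)) := by
  have hGamma := Real.integral_rpow_mul_exp_neg_mul_Ioi (a := n + 1) (by positivity) ha
  simp only [add_sub_cancel_right, Real.rpow_natCast, Real.Gamma_nat_eq_factorial] at hGamma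
  simp only [neg_mul]
  rw [integral_comp_abs (f := fun x => x ^ n * Real.exp (-(a * x))), hGamma, ← Nat.cast_add_one,
    Real.rpow_natCast, one_div, inv_pow, inv_mul_eq_div]

lemma integrable_abs_pow_mul_exp_neg_mul_abs {a : ℝ} (ha : 0 < a) (n : ℕ) :
    Integrable fun x : ℝ => |x| ^ n * Real.exp (-a * |x|) := by
  refine .of_integral_ne_zero ?_
  rw [integral_abs_pow_mul_exp_neg_mul_abs ha]
  positivity

lemma integral_exp_neg_mul_max_abs {a : ℝ} (ha : 0 < a) {c : ℝ} (hc : 0 ≤ c) :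
    ∫ x : ℝ, Real.exp (-a * max c |x|) = 2 * ((c + 1 / a) * Real.exp (-a * c)) := by
  have hconst : ∀ x ∈ Set.Ioc 0 c, Real.exp (-a * max c x) = Real.exp (-a * c) := fun x hx => by
    rw [max_eq_left hx.2]
  have hexp : ∀ x ∈ Set.Ioi c, Real.exp (-a * max c x) = Real.exp (-a * x) := fun x hx => by
    rw [max_eq_right (le_of_lt hx)]
  have hint : IntegrableOn (fun x => Real.exp (-a * x)) (Set.Ioi c) :=
    integrableOn_exp_mul_Ioi (neg_neg_of_pos ha) c
  rw [integral_comp_abs (f := fun x => Real.exp (-a * max c x)), ← Set.Ioc_union_Ioi_eq_Ioi hc,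
    setIntegral_union (Set.Ioc_disjoint_Ioi le_rfl) measurableSet_Ioi
      (by fun_prop : Continuous _).integrableOn_Ioc
      (hint.congr_fun (fun x hx => (hexp x hx).symm) measurableSet_Ioi),
    setIntegral_congr_fun measurableSet_Ioc hconst, setIntegral_congr_fun measurableSet_Ioi hexp,
    setIntegral_const, integral_exp_mul_Ioi (neg_neg_of_pos ha), Real.volume_real_Ioc_of_le hc,
    smul_eq_mul, sub_zero, neg_div_neg_eq]
  ring

lemma integrable_norm_comp_add_left_mul_exp {E : Type*} [NormedAddCommGroup E] {h : ℝ → E}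
    (hh : MemLp h 2) {a : ℝ} (ha : 0 < a) (x : ℝ) :
    Integrable fun v => ‖h (x + v)‖ * Real.exp (-a * |v|) := by
  have hexp : MemLp (fun v : ℝ => Real.exp (-a * |v|)) 2 := by
    refine (memLp_two_iff_integrable_sq (Continuous.aestronglyMeasurable (by fun_prop))).2 ?_
    convert integrable_abs_pow_mul_exp_neg_mul_abs (mul_pos two_pos ha) 0 using 2 with v
    rw [← Real.exp_nat_mul, pow_zero, one_mul]
    push_cast
    ring_nf
  exact (hh.comp_measurePreserving (measurePreserving_add_left volume x)).norm.integrable_mul hexp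

end Exponential

section Resolvent

/-- The integral kernel of the resolvent `R₀(κ) = (−∂² + κ²)⁻¹`. -/
noncomputable def resolventKernel (κ x y : ℝ) : ℝ :=
  (2 * κ)⁻¹ * Real.exp (-κ * |x - y|)

lemma resolventKernel_add_left (κ w x y : ℝ) :
    resolventKernel κ (w + x) (w + y) = resolventKernel κ x y := by
  simp only [resolventKernel, add_sub_add_left_eq_sub]

lemma integral_resolventKernel_mul {κ : ℝ} (hκ : 0 < κ) (x z : ℝ) :
    ∫ y, resolventKernel κ x y * resolventKernel κ y z =
      (|x - z| + 1 / κ) / (2 * κ) * resolventKernel κ x z := by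
  have hmax (y : ℝ) : resolventKernel κ x y * resolventKernel κ y z =
      (2 * κ)⁻¹ ^ 2 * Real.exp (-κ * max |x - z| |2 * (y + -((x + z) / 2))|) := by
    have habs : |x - y| + |y - z| = max |x - z| |2 * (y + -((x + z) / 2))| := by grind
    rw [← habs, mul_add, Real.exp_add, resolventKernel, resolventKernel]
    ring
  simp only [hmax]
  rw [integral_const_mul, integral_add_right_eq_self
      (fun y => Real.exp (-κ * max |x - z| |2 * y|)),
    Measure.integral_comp_mul_left (fun y => Real.exp (-κ * max |x - z| |y|)),
    integral_exp_neg_mul_max_abs hκ (abs_nonneg _), resolventKernel, smul_eq_mul,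
    abs_of_pos (by norm_num)]
  ring

/-- The weight `R₀(0, u) R₀(u, v) R₀(v, 0)` attached to the displacements `p = (u, v)` from the base
point `x` in `⟨δₓ, R₀ f R₀ h R₀ δₓ⟩`. -/
noncomputable def loopKernel (κ : ℝ) (p : ℝ × ℝ) : ℝ :=
  resolventKernel κ 0 p.1 * resolventKernel κ p.1 p.2 * resolventKernel κ p.2 0

lemma continuous_loopKernel (κ : ℝ) : Continuous (loopKernel κ) := by
  unfold loopKernel resolventKernel
  fun_prop

lemma loopKernel_neg (κ : ℝ) (p : ℝ × ℝ) : loopKernel κ (-p) = loopKernel κ p := by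
  have hneg (x y : ℝ) : resolventKernel κ (-x) (-y) = resolventKernel κ x y := by
    simp only [resolventKernel, neg_sub_neg, abs_sub_comm]
  simpa only [loopKernel, Prod.fst_neg, Prod.snd_neg, neg_zero] using
    congr_arg₂ (· * ·) (congr_arg₂ (· * ·) (hneg 0 p.1) (hneg p.1 p.2)) (hneg p.2 0)

variable {κ : ℝ}

lemma loopKernel_nonneg (hκ : 0 ≤ κ) (p : ℝ × ℝ) : 0 ≤ loopKernel κ p := by
  unfold loopKernel resolventKernel
  positivity

lemma loopKernel_le (hκ : 0 ≤ κ) (p : ℝ × ℝ) :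
    loopKernel κ p ≤ (2 * κ)⁻¹ ^ 3 * (Real.exp (-κ * |p.1|) * Real.exp (-κ * |p.2|)) := by
  have hle : Real.exp (-κ * |p.1 - p.2|) ≤ 1 :=
    Real.exp_le_one_iff.2 (mul_nonpos_of_nonpos_of_nonneg (neg_nonpos.2 hκ) (abs_nonneg _))
  calc loopKernel κ p
      = (2 * κ)⁻¹ ^ 3 * (Real.exp (-κ * |p.1|) * Real.exp (-κ * |p.2|)) *
          Real.exp (-κ * |p.1 - p.2|) := by
        simp only [loopKernel, resolventKernel, zero_sub, sub_zero, abs_neg]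
        ring
    _ ≤ _ := mul_le_of_le_one_right (by positivity) hle

variable {E : Type*} [NormedAddCommGroup E] [NormedSpace ℝ E]

lemma integrable_loopKernel_smul (hκ : 0 ≤ κ) {G : ℝ × ℝ → E} (hG : AEStronglyMeasurable G)
    {φ ψ : ℝ → ℝ} (hφ : Integrable fun u => φ u * Real.exp (-κ * |u|))
    (hψ : Integrable fun v => ψ v * Real.exp (-κ * |v|)) (hle : ∀ p, ‖G p‖ ≤ φ p.1 * ψ p.2) :
    Integrable fun p => loopKernel κ p • G p := by
  refine ((hφ.mul_prod hψ).const_mul ((2 * κ)⁻¹ ^ 3)).mono'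
    ((continuous_loopKernel κ).aestronglyMeasurable.smul hG) (.of_forall fun p => ?_)
  calc ‖loopKernel κ p • G p‖
      = loopKernel κ p * ‖G p‖ := by rw [norm_smul, Real.norm_of_nonneg (loopKernel_nonneg hκ p)]
    _ ≤ (2 * κ)⁻¹ ^ 3 * (Real.exp (-κ * |p.1|) * Real.exp (-κ * |p.2|)) * (φ p.1 * ψ p.2) :=
        mul_le_mul (loopKernel_le hκ p) (hle p) (norm_nonneg _) (by positivity)
    _ = _ := by ring

lemma integrable_loopKernel_mul_pow (hκ : 0 < κ) (m n : ℕ) :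
    Integrable fun p => loopKernel κ p * (p.1 ^ m * p.2 ^ n) :=
  integrable_loopKernel_smul hκ.le (Continuous.aestronglyMeasurable (by fun_prop))
    (integrable_abs_pow_mul_exp_neg_mul_abs hκ m) (integrable_abs_pow_mul_exp_neg_mul_abs hκ n)
    fun p => by rw [norm_mul, norm_pow, norm_pow, Real.norm_eq_abs, Real.norm_eq_abs]

lemma integral_loopKernel (hκ : 0 < κ) : ∫ p, loopKernel κ p = 3 / (16 * κ ^ 5) := by
  have hint : Integrable (loopKernel κ) := by
    simpa using integrable_loopKernel_mul_pow hκ 0 0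
  have hinner (v : ℝ) : ∫ u, loopKernel κ (u, v) =
      (2 * κ)⁻¹ ^ 3 * (|v| ^ 1 * Real.exp (-(2 * κ) * |v|)) +
        (2 * κ)⁻¹ ^ 3 / κ * (|v| ^ 0 * Real.exp (-(2 * κ) * |v|)) := by
    have hexp : Real.exp (-(2 * κ) * |v|) = Real.exp (-κ * |v|) * Real.exp (-κ * |v|) := by
      rw [← Real.exp_add]
      ring_nf
    simp only [loopKernel, integral_mul_const, integral_resolventKernel_mul hκ, hexp]
    simp only [resolventKernel, zero_sub, sub_zero, abs_neg]
    ring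
  have h2κ : 0 < 2 * κ := by positivity
  rw [Measure.volume_eq_prod, integral_prod_symm _ hint]
  simp only [hinner]
  rw [integral_add ((integrable_abs_pow_mul_exp_neg_mul_abs h2κ 1).const_mul _)
      ((integrable_abs_pow_mul_exp_neg_mul_abs h2κ 0).const_mul _),
    integral_const_mul, integral_const_mul, integral_abs_pow_mul_exp_neg_mul_abs h2κ,
    integral_abs_pow_mul_exp_neg_mul_abs h2κ, Nat.factorial_one, Nat.factorial_zero]
  field_simp
  ring

lemma integral_loopKernel_smul_of_odd {G : ℝ × ℝ → E} (hG : ∀ p, G (-p) = -G p) :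
    ∫ p, loopKernel κ p • G p = 0 := by
  have hneg := integral_neg_eq_self (fun p => loopKernel κ p • G p) (volume : Measure (ℝ × ℝ))
  simp only [loopKernel_neg, hG, smul_neg, integral_neg] at hneg
  have : IsAddTorsionFree E := .of_isTorsionFree ℝ E
  exact self_eq_neg.1 hneg.symm

lemma lintegral_loopKernel_mul_sq_add_sq_le (hκ : 0 < κ) :
    ∫⁻ p : ℝ × ℝ, ENNReal.ofReal (loopKernel κ p * (p.1 ^ 2 + p.2 ^ 2)) ≤
      ENNReal.ofReal (2 / κ ^ 7) := by
  let m (n : ℕ) (x : ℝ) : ℝ := |x| ^ n * Real.exp (-κ * |x|)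
  let B (p : ℝ × ℝ) : ℝ := (2 * κ)⁻¹ ^ 3 * (m 2 p.1 * m 0 p.2 + m 0 p.1 * m 2 p.2)
  have hm (n : ℕ) : Integrable (m n) := integrable_abs_pow_mul_exp_neg_mul_abs hκ n
  have hle (p : ℝ × ℝ) : loopKernel κ p * (p.1 ^ 2 + p.2 ^ 2) ≤ B p := by
    calc loopKernel κ p * (p.1 ^ 2 + p.2 ^ 2)
        ≤ (2 * κ)⁻¹ ^ 3 * (Real.exp (-κ * |p.1|) * Real.exp (-κ * |p.2|)) *
            (p.1 ^ 2 + p.2 ^ 2) := by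
          gcongr
          exact loopKernel_le hκ.le p
      _ = B p := by
          simp only [B, m, sq_abs, pow_zero]
          ring
  calc ∫⁻ p : ℝ × ℝ, ENNReal.ofReal (loopKernel κ p * (p.1 ^ 2 + p.2 ^ 2))
      ≤ ∫⁻ p, ENNReal.ofReal (B p) := lintegral_mono fun p => ENNReal.ofReal_le_ofReal (hle p)
    _ = ENNReal.ofReal (∫ p, B p) :=
        (ofReal_integral_eq_lintegral_ofReal
          ((((hm 2).mul_prod (hm 0)).add ((hm 0).mul_prod (hm 2))).const_mul _)
          (.of_forall fun p => (mul_nonneg (loopKernel_nonneg hκ.le p) (by positivity)).trans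
            (hle p))).symm
    _ = ENNReal.ofReal (2 / κ ^ 7) := by
        congr 1
        simp only [B]
        rw [integral_const_mul, Measure.volume_eq_prod,
          integral_add ((hm 2).mul_prod (hm 0)) ((hm 0).mul_prod (hm 2)),
          integral_prod_mul, integral_prod_mul]
        simp only [m, integral_abs_pow_mul_exp_neg_mul_abs hκ, Nat.factorial]
        field_simp
        ring

end Resolvent

section TaylorRemainder

variable {E : Type*} [NormedAddCommGroup E] [NormedSpace ℝ E]

/-- The remainder of `f(x + u) h(x + v)`, where `p = (u, v)`, after subtracting its first order
Taylor polynomial in `p`. -/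
noncomputable def taylorRemainder (f : ℝ → ℝ) (h : ℝ → E) (x : ℝ) (p : ℝ × ℝ) : E :=
  f (x + p.1) • h (x + p.2) - f x • h x - (p.1 • deriv f x • h x + p.2 • f x • deriv h x)

lemma taylorRemainder_eq (f : ℝ → ℝ) (h : ℝ → E) (x : ℝ) (p : ℝ × ℝ) :
    taylorRemainder f h x p =
      (f (x + p.1) - f x - p.1 * deriv f x) • h (x + p.2) +
        f x • (h (x + p.2) - h x - p.2 • deriv h x) +
        (p.1 * deriv f x) • (h (x + p.2) - h x) := by
  unfold taylorRemainder
  module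

variable {f : ℝ → ℝ} {h : ℝ → E}

lemma continuous_uncurry_taylorRemainder (hf : Continuous f) (hf' : Continuous (deriv f))
    (hh : Continuous h) (hh' : Continuous (deriv h)) :
    Continuous (uncurry (taylorRemainder f h)) := by
  unfold uncurry taylorRemainder
  fun_prop

variable {M₀ M₁ : ℝ} {M₂ : ℝ≥0}

lemma eLpNorm_two_sub_sub_mul_deriv_smul_le (hf : Differentiable ℝ f)
    (hM₂ : LipschitzWith M₂ (deriv f)) (hh : Continuous h) (u v : ℝ) :
    eLpNorm (fun x => (f (x + u) - f x - u * deriv f x) • h (x + v)) 2 ≤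
      ENNReal.ofReal (M₂ * u ^ 2) * eLpNorm h 2 := by
  rw [← eLpNorm_comp_add_right hh v]
  exact eLpNorm_smul_le_of_abs_le (fun x => abs_sub_sub_mul_deriv_le hf hM₂ x u) _ 2

variable [CompleteSpace E]

lemma eLpNorm_two_smul_sub_sub_smul_deriv_le {g : ℝ → ℝ} {M : ℝ} (hM : ∀ x, |g x| ≤ M)
    (hh : ContDiff ℝ 2 h) (v : ℝ) :
    eLpNorm (fun x => g x • (h (x + v) - h x - v • deriv h x)) 2 ≤
      ENNReal.ofReal (M * v ^ 2) * eLpNorm (iteratedDeriv 2 h) 2 := by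
  have hM_nonneg : 0 ≤ M := (abs_nonneg _).trans (hM 0)
  rw [ENNReal.ofReal_mul hM_nonneg, ← sq_abs, ENNReal.ofReal_pow (abs_nonneg v),
    ← Real.enorm_eq_ofReal_abs, mul_assoc]
  exact (eLpNorm_smul_le_of_abs_le hM _ 2).trans
    (mul_le_mul_right (eLpNorm_two_sub_sub_smul_deriv_le hh v) _)

lemma eLpNorm_two_mul_smul_sub_le {g : ℝ → ℝ} {M : ℝ} (hM : ∀ x, |g x| ≤ M) (hh : ContDiff ℝ 2 h)
    (u v : ℝ) :
    eLpNorm (fun x => (u * g x) • (h (x + v) - h x)) 2 ≤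
      ENNReal.ofReal (M * (u ^ 2 + v ^ 2)) * (eLpNorm h 2 + eLpNorm (iteratedDeriv 2 h) 2) := by
  have hM_nonneg : 0 ≤ M := (abs_nonneg _).trans (hM 0)
  have hug (x : ℝ) : |u * g x| ≤ |u| * M := by
    rw [abs_mul]
    gcongr
    exact hM x
  set N : ℝ≥0∞ := eLpNorm h 2 + eLpNorm (iteratedDeriv 2 h) 2
  have hsub : eLpNorm (fun x => h (x + v) - h x) 2 ≤ ‖v‖ₑ * (2 * N) :=
    (eLpNorm_two_sub_le (hh.of_le one_le_two) v).trans
      (mul_le_mul_right (eLpNorm_two_deriv_le hh) _)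
  calc eLpNorm (fun x => (u * g x) • (h (x + v) - h x)) 2 volume
      ≤ ENNReal.ofReal (|u| * M) * (‖v‖ₑ * (2 * N)) :=
        (eLpNorm_smul_le_of_abs_le hug _ 2).trans (mul_le_mul_right hsub _)
    _ = ENNReal.ofReal (M * (2 * |u| * |v|)) * N := by
        rw [Real.enorm_eq_ofReal_abs, ← ENNReal.ofReal_ofNat 2, ← mul_assoc, ← mul_assoc,
          ← ENNReal.ofReal_mul (by positivity), ← ENNReal.ofReal_mul (by positivity)]
        ring_nf
    _ ≤ ENNReal.ofReal (M * (u ^ 2 + v ^ 2)) * N := by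
        gcongr
        simpa only [sq_abs] using two_mul_le_add_sq |u| |v|

lemma eLpNorm_two_taylorRemainder_le (hf : Differentiable ℝ f) (hM₀ : ∀ x, |f x| ≤ M₀)
    (hM₁ : ∀ x, |deriv f x| ≤ M₁) (hM₂ : LipschitzWith M₂ (deriv f)) (hh : ContDiff ℝ 2 h)
    (p : ℝ × ℝ) :
    eLpNorm (fun x => taylorRemainder f h x p) 2 ≤
      ENNReal.ofReal ((p.1 ^ 2 + p.2 ^ 2) * (M₀ + M₁ + M₂)) *
        (eLpNorm h 2 + eLpNorm (iteratedDeriv 2 h) 2) := by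
  obtain ⟨u, v⟩ := p
  have hM₀_nonneg : 0 ≤ M₀ := (abs_nonneg _).trans (hM₀ 0)
  have hM₁_nonneg : 0 ≤ M₁ := (abs_nonneg _).trans (hM₁ 0)
  have hc := hf.continuous
  have hc' := hM₂.continuous
  have hhc := hh.continuous
  have hhc' : Continuous (deriv h) := hh.continuous_deriv one_le_two
  set N : ℝ≥0∞ := eLpNorm h 2 + eLpNorm (iteratedDeriv 2 h) 2
  let A (x : ℝ) : E := (f (x + u) - f x - u * deriv f x) • h (x + v)
  let B (x : ℝ) : E := f x • (h (x + v) - h x - v • deriv h x)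
  let C (x : ℝ) : E := (u * deriv f x) • (h (x + v) - h x)
  obtain ⟨hA, hB, hC⟩ : Continuous A ∧ Continuous B ∧ Continuous C :=
    ⟨by fun_prop, by fun_prop, by fun_prop⟩
  calc eLpNorm (fun x => taylorRemainder f h x (u, v)) 2 volume
      = eLpNorm (A + B + C) 2 volume := by
        congr 1
        exact funext fun x => taylorRemainder_eq f h x (u, v)
    _ ≤ eLpNorm A 2 volume + eLpNorm B 2 volume + eLpNorm C 2 volume :=
        eLpNorm_add_add_le hA.aestronglyMeasurable hB.aestronglyMeasurable
          hC.aestronglyMeasurable one_le_two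
    _ ≤ ENNReal.ofReal (M₂ * u ^ 2) * N + ENNReal.ofReal (M₀ * v ^ 2) * N +
          ENNReal.ofReal (M₁ * (u ^ 2 + v ^ 2)) * N :=
        add_le_add (add_le_add
          ((eLpNorm_two_sub_sub_mul_deriv_smul_le hf hM₂ hhc u v).trans
            (mul_le_mul_right le_self_add _))
          ((eLpNorm_two_smul_sub_sub_smul_deriv_le hM₀ hh v).trans
            (mul_le_mul_right le_add_self _)))
          (eLpNorm_two_mul_smul_sub_le hM₁ hh u v)
    _ = ENNReal.ofReal (M₂ * u ^ 2 + M₀ * v ^ 2 + M₁ * (u ^ 2 + v ^ 2)) * N := by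
        rw [← add_mul, ← add_mul, ENNReal.ofReal_add (by positivity) (by positivity),
          ENNReal.ofReal_add (by positivity) (by positivity)]
    _ ≤ ENNReal.ofReal ((u ^ 2 + v ^ 2) * (M₀ + M₁ + M₂)) * N := by
        gcongr
        nlinarith [mul_nonneg M₂.2 (sq_nonneg v), mul_nonneg hM₀_nonneg (sq_nonneg u)]

end TaylorRemainder

section DiagResolvent

variable {E : Type*} [NormedAddCommGroup E] [NormedSpace ℝ E]

/-- The diagonal matrix element `⟨δₓ, R₀ f R₀ h R₀ δₓ⟩`, written out with the kernel of
`R₀ = R₀(κ)`. -/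
noncomputable def diagResolvent (κ : ℝ) (f : ℝ → ℝ) (h : ℝ → E) (x : ℝ) : E :=
  ∫ p : ℝ × ℝ, (resolventKernel κ x p.1 * f p.1 * resolventKernel κ p.1 p.2 *
    resolventKernel κ p.2 x) • h p.2

lemma diagResolvent_eq_integral_loopKernel (κ : ℝ) (f : ℝ → ℝ) (h : ℝ → E) (x : ℝ) :
    diagResolvent κ f h x = ∫ p, loopKernel κ p • f (x + p.1) • h (x + p.2) := by
  have hleft (u : ℝ) : resolventKernel κ x (x + u) = resolventKernel κ 0 u := by
    simpa only [add_zero] using resolventKernel_add_left κ x 0 u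
  have hright (v : ℝ) : resolventKernel κ (x + v) x = resolventKernel κ v 0 := by
    simpa only [add_zero] using resolventKernel_add_left κ x v 0
  rw [diagResolvent, ← integral_add_left_eq_self _ (x, x)]
  refine integral_congr_ae (.of_forall fun p => ?_)
  simp only [Prod.fst_add, Prod.snd_add, hleft, hright, resolventKernel_add_left, loopKernel,
    smul_smul]
  ring_nf

variable {κ M₀ : ℝ} {f : ℝ → ℝ} {h : ℝ → E}

lemma stronglyMeasurable_uncurry_loopKernel_smul_taylorRemainder (κ : ℝ) (hf : Continuous f)
    (hf' : Continuous (deriv f)) (hh : Continuous h) (hh' : Continuous (deriv h)) :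
    StronglyMeasurable (uncurry fun x p => loopKernel κ p • taylorRemainder f h x p) :=
  (((continuous_loopKernel κ).comp continuous_snd).smul
    (continuous_uncurry_taylorRemainder hf hf' hh hh')).stronglyMeasurable

lemma integrable_loopKernel_smul_smul (hκ : 0 < κ) (hf : Continuous f) (hM₀ : ∀ x, |f x| ≤ M₀)
    (hhc : Continuous h) (hh : MemLp h 2) (x : ℝ) :
    Integrable fun p => loopKernel κ p • f (x + p.1) • h (x + p.2) := by
  refine integrable_loopKernel_smul hκ.le (Continuous.aestronglyMeasurable (by fun_prop))
    (φ := fun _ => M₀) (ψ := fun v => ‖h (x + v)‖) ?_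
    (integrable_norm_comp_add_left_mul_exp hh hκ x) fun p => ?_
  · simpa using (integrable_abs_pow_mul_exp_neg_mul_abs hκ 0).const_mul M₀
  · rw [norm_smul]
    gcongr
    exact hM₀ _

variable [CompleteSpace E]

lemma integral_loopKernel_smul_taylorRemainder (hκ : 0 < κ) (hf : Continuous f)
    (hM₀ : ∀ x, |f x| ≤ M₀) (hhc : Continuous h) (hh : MemLp h 2) (x : ℝ) :
    ∫ p, loopKernel κ p • taylorRemainder f h x p =
      diagResolvent κ f h x - (3 / (16 * κ ^ 5)) • f x • h x := by
  let L (p : ℝ × ℝ) : E := p.1 • deriv f x • h x + p.2 • f x • deriv h x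
  have hL_odd (p : ℝ × ℝ) : L (-p) = -L p := by
    simp only [L, Prod.fst_neg, Prod.snd_neg, neg_smul, neg_add]
  have hL : Integrable fun p => loopKernel κ p • L p := by
    simp only [L, smul_add, smul_smul _ (Prod.fst _), smul_smul _ (Prod.snd _)]
    refine .add (.smul_const ?_ _) (.smul_const ?_ _)
    · simpa using integrable_loopKernel_mul_pow hκ 1 0
    · simpa using integrable_loopKernel_mul_pow hκ 0 1
  have hconst : Integrable fun p => loopKernel κ p • f x • h x := by
    simpa using (integrable_loopKernel_mul_pow hκ 0 0).smul_const (f x • h x)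
  have hprod := integrable_loopKernel_smul_smul hκ hf hM₀ hhc hh x
  have hsub : Integrable fun p =>
      loopKernel κ p • f (x + p.1) • h (x + p.2) - loopKernel κ p • f x • h x := hprod.sub hconst
  calc ∫ p, loopKernel κ p • taylorRemainder f h x p
      = ∫ p, (loopKernel κ p • f (x + p.1) • h (x + p.2) - loopKernel κ p • f x • h x -
          loopKernel κ p • L p) := by simp only [taylorRemainder, L, smul_sub]
    _ = diagResolvent κ f h x - (3 / (16 * κ ^ 5)) • f x • h x := by
        rw [integral_sub hsub hL, integral_sub hprod hconst, integral_smul_const,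
          integral_loopKernel hκ, integral_loopKernel_smul_of_odd hL_odd, sub_zero,
          diagResolvent_eq_integral_loopKernel]

lemma smul_diagResolvent_sub_eq (hκ : 0 < κ) (hf : Continuous f) (hM₀ : ∀ x, |f x| ≤ M₀)
    (hhc : Continuous h) (hh : MemLp h 2) (x : ℝ) :
    (16 * κ ^ 5) • diagResolvent κ f h x - (3 * f x) • h x =
      (16 * κ ^ 5) • ∫ p, loopKernel κ p • taylorRemainder f h x p := by
  rw [integral_loopKernel_smul_taylorRemainder hκ hf hM₀ hhc hh, smul_sub, smul_smul, smul_smul,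
    mul_div_cancel₀ _ (by positivity)]

lemma aestronglyMeasurable_smul_diagResolvent_sub (hκ : 0 < κ) (hf : ContDiff ℝ 1 f)
    (hM₀ : ∀ x, |f x| ≤ M₀) (hh : ContDiff ℝ 1 h) (hh2 : MemLp h 2) :
    AEStronglyMeasurable fun x => (16 * κ ^ 5) • diagResolvent κ f h x - (3 * f x) • h x := by
  simp only [smul_diagResolvent_sub_eq hκ hf.continuous hM₀ hh.continuous hh2]
  exact ((stronglyMeasurable_uncurry_loopKernel_smul_taylorRemainder κ hf.continuous
    (hf.continuous_deriv le_rfl) hh.continuous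
    (hh.continuous_deriv le_rfl)).integral_prod_right.const_smul _).aestronglyMeasurable

lemma eLpNorm_two_integral_loopKernel_smul_taylorRemainder_le {M₁ : ℝ} {M₂ : ℝ≥0} (hκ : 0 < κ)
    (hf : Differentiable ℝ f) (hM₀ : ∀ x, |f x| ≤ M₀) (hM₁ : ∀ x, |deriv f x| ≤ M₁)
    (hM₂ : LipschitzWith M₂ (deriv f)) (hh : ContDiff ℝ 2 h) :
    eLpNorm (fun x => ∫ p, loopKernel κ p • taylorRemainder f h x p) 2 ≤
      ENNReal.ofReal (2 / κ ^ 7) * (ENNReal.ofReal (M₀ + M₁ + M₂) *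
        (eLpNorm h 2 + eLpNorm (iteratedDeriv 2 h) 2)) := by
  set N : ℝ≥0∞ := eLpNorm h 2 + eLpNorm (iteratedDeriv 2 h) 2
  have hmeas := stronglyMeasurable_uncurry_loopKernel_smul_taylorRemainder κ hf.continuous
    hM₂.continuous hh.continuous (hh.continuous_deriv one_le_two)
  have hpoint (p : ℝ × ℝ) : eLpNorm (fun x => loopKernel κ p • taylorRemainder f h x p) 2 ≤
      ENNReal.ofReal (loopKernel κ p * (p.1 ^ 2 + p.2 ^ 2)) *
        (ENNReal.ofReal (M₀ + M₁ + M₂) * N) := by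
    have hK := loopKernel_nonneg hκ.le p
    refine (eLpNorm_smul_le_of_abs_le (fun _ => (abs_of_nonneg hK).le) _ 2).trans ?_
    rw [ENNReal.ofReal_mul hK, mul_assoc, ← mul_assoc (ENNReal.ofReal _) (ENNReal.ofReal _) N,
      ← ENNReal.ofReal_mul (by positivity)]
    exact mul_le_mul_right (eLpNorm_two_taylorRemainder_le hf hM₀ hM₁ hM₂ hh p) _
  have hK : Measurable fun p : ℝ × ℝ => ENNReal.ofReal (loopKernel κ p * (p.1 ^ 2 + p.2 ^ 2)) :=
    ((continuous_loopKernel κ).measurable.mul (by fun_prop)).ennreal_ofReal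
  calc eLpNorm (fun x => ∫ p, loopKernel κ p • taylorRemainder f h x p) 2 volume
      ≤ ∫⁻ p, eLpNorm (fun x => loopKernel κ p • taylorRemainder f h x p) 2 volume :=
        eLpNorm_two_integral_le hmeas
    _ ≤ ∫⁻ p : ℝ × ℝ, ENNReal.ofReal (loopKernel κ p * (p.1 ^ 2 + p.2 ^ 2)) *
          (ENNReal.ofReal (M₀ + M₁ + M₂) * N) := lintegral_mono hpoint
    _ ≤ ENNReal.ofReal (2 / κ ^ 7) * (ENNReal.ofReal (M₀ + M₁ + M₂) * N) := by
        rw [lintegral_mul_const _ hK]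
        exact mul_le_mul_left (lintegral_loopKernel_mul_sq_add_sq_le hκ) _

lemma eLpNorm_two_smul_diagResolvent_sub_le {M₁ : ℝ} {M₂ : ℝ≥0} (hκ : 0 < κ)
    (hf : Differentiable ℝ f) (hM₀ : ∀ x, |f x| ≤ M₀) (hM₁ : ∀ x, |deriv f x| ≤ M₁)
    (hM₂ : LipschitzWith M₂ (deriv f)) (hh : ContDiff ℝ 2 h) (hh2 : MemLp h 2) :
    eLpNorm (fun x => (16 * κ ^ 5) • diagResolvent κ f h x - (3 * f x) • h x) 2 ≤
      ENNReal.ofReal (32 * (κ ^ 2)⁻¹ * (M₀ + M₁ + M₂)) *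
        (eLpNorm h 2 + eLpNorm (iteratedDeriv 2 h) 2) := by
  simp only [smul_diagResolvent_sub_eq hκ hf.continuous hM₀ hh.continuous hh2]
  have hconst : 32 * (κ ^ 2)⁻¹ = 16 * κ ^ 5 * (2 / κ ^ 7) := by
    field_simp
    norm_num
  refine (eLpNorm_smul_le_of_abs_le (fun _ => (abs_of_nonneg (by positivity)).le) _ 2).trans ?_
  rw [hconst, mul_assoc (16 * κ ^ 5), ENNReal.ofReal_mul (p := 16 * κ ^ 5) (by positivity),
    ENNReal.ofReal_mul (p := 2 / κ ^ 7) (by positivity), mul_assoc, mul_assoc]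
  exact mul_le_mul_right
    (eLpNorm_two_integral_loopKernel_smul_taylorRemainder_le hκ hf hM₀ hM₁ hM₂ hh) _

lemma memLp_two_smul_diagResolvent_sub {M₁ : ℝ} {M₂ : ℝ≥0} (hκ : 0 < κ)
    (hf : Differentiable ℝ f) (hM₀ : ∀ x, |f x| ≤ M₀) (hM₁ : ∀ x, |deriv f x| ≤ M₁)
    (hM₂ : LipschitzWith M₂ (deriv f)) (hh : ContDiff ℝ 2 h) (hh₀ : MemLp h 2)
    (hh₂ : MemLp (iteratedDeriv 2 h) 2) :
    MemLp (fun x => (16 * κ ^ 5) • diagResolvent κ f h x - (3 * f x) • h x) 2 :=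
  ⟨aestronglyMeasurable_smul_diagResolvent_sub hκ
      (contDiff_one_iff_deriv.2 ⟨hf, hM₂.continuous⟩) hM₀ (hh.of_le one_le_two) hh₀,
    (eLpNorm_two_smul_diagResolvent_sub_le hκ hf hM₀ hM₁ hM₂ hh hh₀).trans_lt
      (ENNReal.mul_lt_top ENNReal.ofReal_lt_top
        (ENNReal.add_lt_top.2 ⟨hh₀.eLpNorm_lt_top, hh₂.eLpNorm_lt_top⟩))⟩

end DiagResolvent

lemma lipschitzWith_deriv_of_abs_iteratedDeriv_two_le {f : ℝ → ℝ} (hf : ContDiff ℝ 2 f) {M : ℝ≥0}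
    (hM : ∀ x, |iteratedDeriv 2 f x| ≤ M) : LipschitzWith M (deriv f) := by
  refine lipschitzWith_of_nnnorm_deriv_le
    ((hf.iterate_deriv' 1 1).differentiable one_ne_zero) fun x => ?_
  have hx := hM x
  rw [iteratedDeriv_succ, iteratedDeriv_one] at hx
  exact hx

lemma memLp_iteratedDeriv_two_schwartzMap {E : Type*} [NormedAddCommGroup E] [NormedSpace ℝ E]
    (h : SchwartzMap ℝ E) : MemLp (iteratedDeriv 2 h) 2 := by
  have hcoe : iteratedDeriv 2 h = SchwartzMap.derivCLM ℝ E (SchwartzMap.derivCLM ℝ E h) := by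
    rw [iteratedDeriv_succ, iteratedDeriv_one]
    rfl
  rw [hcoe]
  exact SchwartzMap.memLp _ 2 volume

theorem stmt16_general {E : Type*} [NormedAddCommGroup E] [NormedSpace ℝ E] [CompleteSpace E]
    {κ : ℝ} (hκ : 0 < κ) {f : ℝ → ℝ} (hf : ContDiff ℝ 2 f)
    (hf₀ : BddAbove (Set.range fun x => |f x|))
    (hf₁ : BddAbove (Set.range fun x => |deriv f x|))
    (hf₂ : BddAbove (Set.range fun x => |iteratedDeriv 2 f x|))
    {h : ℝ → E} (hh : ContDiff ℝ 2 h) (hh₀ : MemLp h 2) (hh₂ : MemLp (iteratedDeriv 2 h) 2) :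
    MemLp (fun x => (16 * κ ^ 5) • diagResolvent κ f h x - (3 * f x) • h x) 2 ∧
      √(∫ x, ‖(16 * κ ^ 5) • diagResolvent κ f h x - (3 * f x) • h x‖ ^ 2) ≤
        32 * (κ ^ 2)⁻¹ * ((⨆ x, |f x|) + (⨆ x, |deriv f x|) + ⨆ x, |iteratedDeriv 2 f x|) *
          (√(∫ x, ‖h x‖ ^ 2) + √(∫ x, ‖iteratedDeriv 2 h x‖ ^ 2)) := by
  have habs₀ (x : ℝ) : |f x| ≤ ⨆ x, |f x| := le_ciSup hf₀ x
  have habs₁ (x : ℝ) : |deriv f x| ≤ ⨆ x, |deriv f x| := le_ciSup hf₁ x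
  have hLip : LipschitzWith ⟨⨆ x, |iteratedDeriv 2 f x|, Real.iSup_nonneg fun _ => abs_nonneg _⟩
      (deriv f) := lipschitzWith_deriv_of_abs_iteratedDeriv_two_le hf (le_ciSup hf₂)
  have hle := eLpNorm_two_smul_diagResolvent_sub_le hκ (hf.differentiable two_ne_zero) habs₀ habs₁
    hLip hh hh₀
  have hmem := memLp_two_smul_diagResolvent_sub hκ (hf.differentiable two_ne_zero) habs₀ habs₁
    hLip hh hh₀ hh₂
  have hnonneg {g : ℝ → ℝ} : 0 ≤ ⨆ x, |g x| := Real.iSup_nonneg fun _ => abs_nonneg _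
  refine ⟨hmem, sqrt_integral_norm_sq_le_of_eLpNorm_two_le hmem hh₀ hh₂ ?_ hle⟩
  exact mul_nonneg (by positivity) (add_nonneg (add_nonneg hnonneg hnonneg) hnonneg)

/-- `‖16κ⁵⟨δₓ, R₀ f R₀ h R₀ δₓ⟩ − 3fh‖_{L²} ≲ κ^{-2} ‖f‖_{W^{2,∞}} ‖h‖_{H²}`
uniformly for `κ ≥ 1`, with the operator written out with kernels. -/
theorem stmt16 : ∃ C : ℝ, 0 < C ∧ ∀ κ : ℝ, 1 ≤ κ → ∀ f : ℝ → ℝ, ContDiff ℝ 2 f →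
    BddAbove (Set.range fun x => |f x|) →
    BddAbove (Set.range fun x => |deriv f x|) →
    BddAbove (Set.range fun x => |iteratedDeriv 2 f x|) →
    ∀ h : SchwartzMap ℝ ℂ,
    Real.sqrt (∫ x : ℝ,
        ‖(16 * (κ : ℂ) ^ 5) *
            (∫ p : ℝ × ℝ,
              ((((2 * κ)⁻¹ * Real.exp (-κ * |x - p.1|)) * f p.1 *
                ((2 * κ)⁻¹ * Real.exp (-κ * |p.1 - p.2|)) *
                ((2 * κ)⁻¹ * Real.exp (-κ * |p.2 - x|)) : ℝ) : ℂ) * h p.2) -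
          3 * (f x : ℂ) * h x‖ ^ 2) ≤
      C * (κ ^ 2)⁻¹ *
        ((⨆ x : ℝ, |f x|) + (⨆ x : ℝ, |deriv f x|) + ⨆ x : ℝ, |iteratedDeriv 2 f x|) *
        (Real.sqrt (∫ x : ℝ, ‖h x‖ ^ 2) +
          Real.sqrt (∫ x : ℝ, ‖iteratedDeriv 2 (⇑h) x‖ ^ 2)) := by
  refine ⟨32, by norm_num, fun κ hκ f hf hf₀ hf₁ hf₂ h => ?_⟩
  simpa [diagResolvent, resolventKernel, Complex.real_smul] using
    (stmt16_general (zero_lt_one.trans_le hκ) hf hf₀ hf₁ hf₂ (h.smooth 2) (h.memLp 2)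
      (memLp_iteratedDeriv_two_schwartzMap h)).2
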